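/- Let y, y' ∈ ℝ^4 be linearly independent. Then the intersection of the two bundle subspaces W_y = { p(y,z) : z ∈ ℝ^4 } and W_{y'} = { p(y',z) : z ∈ ℝ^4 } equals the 1-dimensional subspace spanned by p(y,y'). (Two different bundles of lines have exactly the joining line of their vertices in common; the corresponding two-spaces on Klein's quadric intersect in exactly one point.) -/

import Mathlib

/-- The Plücker coordinate vector `(p01, p02, p03, p23, p31, p12)` of the
pair `x, y ∈ ℝ⁴`. -/
def pluck (x y : Fin 4 → ℝ) : Fin 6 → ℝ :=
  ![x 0 * y 1 - x 1 * y 0, x 0 * y 2 - x 2 * y 0, x 0 * y 3 - x 3 * y 0,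
    x 2 * y 3 - x 3 * y 2, x 3 * y 1 - x 1 * y 3, x 1 * y 2 - x 2 * y 1]

/-!
Contracting `p = p(y, z) = p(y', w)` with a functional `φ` that vanishes at `y` and takes the value
`1` at `y'` gives `w = φ w • y' - φ z • y`, whence `p = p(y', w) = φ z • p(y, y')`.
-/

open Matrix

section VectorSpace

variable {K V P : Type*} [Field K] [AddCommGroup V] [Module K V] [AddCommGroup P] [Module K P]

lemma exists_dual_apply_eq {ι : Type*} {v : ι → V} (hv : LinearIndependent K v) (a : ι → K) :
    ∃ φ : Module.Dual K V, ∀ i, φ (v i) = a i := by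
  obtain ⟨φ, hφ⟩ := ((Module.Basis.span hv).constr K a).exists_extend
  refine ⟨φ, fun i ↦ ?_⟩
  have hi := LinearMap.congr_fun hφ (Module.Basis.span hv i)
  rwa [Module.Basis.constr_basis, LinearMap.comp_apply, Submodule.subtype_apply,
    Module.Basis.span_apply] at hi

/-- The map `c` plays the role of the interior product, whose existence makes `B` behave like the
exterior product of vectors. -/
theorem bundles_intersect_in_joining_line_general {B : V →ₗ[K] V →ₗ[K] P} (hB : B.IsAlt)
    (c : Module.Dual K V → P → V) (hc : ∀ φ x z, c φ (B x z) = φ x • z - φ z • x)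
    {y y' : V} (h : LinearIndependent K ![y, y']) :
    LinearMap.range (B y) ⊓ LinearMap.range (B y') = Submodule.span K {B y y'} := by
  apply le_antisymm
  · rintro _ ⟨⟨z, rfl⟩, w, hw⟩
    obtain ⟨φ, hφ⟩ := exists_dual_apply_eq h ![0, 1]
    have hφy : φ y = 0 := hφ 0
    have hφy' : φ y' = 1 := hφ 1
    have contraction : w - φ w • y' = -(φ z • y) := by
      simpa only [hc, hφy, hφy', zero_smul, one_smul, zero_sub] using congrArg (c φ) hw
    have hw_eq : w = φ w • y' - φ z • y :=
      (sub_eq_iff_eq_add'.mp contraction).trans (sub_eq_add_neg _ _).symm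
    refine Submodule.mem_span_singleton.mpr ⟨φ z, ?_⟩
    calc
      φ z • B y y' = B y' (φ w • y' - φ z • y) := by
        rw [map_sub, map_smul, map_smul, hB y', smul_zero, zero_sub, ← hB.neg y y', smul_neg,
          neg_neg]
      _ = B y z := by rw [← hw_eq, hw]
  · rw [Submodule.span_singleton_le_iff_mem]
    exact ⟨⟨y', rfl⟩, -y, by rw [map_neg, hB.neg]⟩

end VectorSpace

/-- The Plücker vector of a pair as a bilinear map, so that the bundle of lines through `y` is the
range of `pluckBilin y`. -/
def pluckBilin : (Fin 4 → ℝ) →ₗ[ℝ] (Fin 4 → ℝ) →ₗ[ℝ] (Fin 6 → ℝ) :=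
  LinearMap.mk₂ ℝ pluck
    (fun x x' y ↦ by ext k; fin_cases k <;> simp [pluck] <;> ring)
    (fun a x y ↦ by ext k; fin_cases k <;> simp [pluck] <;> ring)
    (fun x y y' ↦ by ext k; fin_cases k <;> simp [pluck] <;> ring)
    (fun a x y ↦ by ext k; fin_cases k <;> simp [pluck] <;> ring)

lemma pluckBilin_isAlt : pluckBilin.IsAlt := fun x ↦ by
  ext k
  fin_cases k <;> simp [pluckBilin, pluck, mul_comm]

/-- The Plücker matrix of a coordinate vector `(p01, p02, p03, p23, p31, p12)`: the skew-symmetric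
matrix with entries `p_ij`, through which covectors act on `p` by contraction. -/
def pluckerMatrix {R : Type*} [Zero R] [Neg R] (p : Fin 6 → R) : Matrix (Fin 4) (Fin 4) R :=
  !![0, p 0, p 1, p 2;
    -p 0, 0, p 5, -p 4;
    -p 1, -p 5, 0, p 3;
    -p 2, p 4, -p 3, 0]

lemma pluckerMatrix_pluck (x y : Fin 4 → ℝ) :
    pluckerMatrix (pluck x y) = vecMulVec x y - vecMulVec y x := by
  ext i j
  fin_cases i <;> fin_cases j <;> simp [pluckerMatrix, pluck, vecMulVec_apply] <;> ring

lemma vecMul_pluckerMatrix_pluck (a x y : Fin 4 → ℝ) :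
    a ᵥ* pluckerMatrix (pluck x y) = (a ⬝ᵥ x) • y - (a ⬝ᵥ y) • x := by
  rw [pluckerMatrix_pluck, vecMul_sub, vecMul_vecMulVec, vecMul_vecMulVec]

lemma dotProductEquiv_symm_vecMul_pluckerMatrix_pluck (φ : Module.Dual ℝ (Fin 4 → ℝ))
    (x y : Fin 4 → ℝ) :
    (dotProductEquiv ℝ (Fin 4)).symm φ ᵥ* pluckerMatrix (pluck x y) = φ x • y - φ y • x := by
  obtain ⟨a, rfl⟩ := (dotProductEquiv ℝ (Fin 4)).surjective φ
  rw [LinearEquiv.symm_apply_apply, vecMul_pluckerMatrix_pluck]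
  rfl

theorem bundles_intersect_in_joining_line (y y' : Fin 4 → ℝ)
    (h : LinearIndependent ℝ ![y, y']) :
    {p : Fin 6 → ℝ | ∃ z : Fin 4 → ℝ, pluck y z = p} ∩
        {p : Fin 6 → ℝ | ∃ z : Fin 4 → ℝ, pluck y' z = p} =
      (Submodule.span ℝ {pluck y y'} : Set (Fin 6 → ℝ)) :=
  congrArg SetLike.coe <| bundles_intersect_in_joining_line_general pluckBilin_isAlt
    (fun φ p ↦ (dotProductEquiv ℝ (Fin 4)).symm φ ᵥ* pluckerMatrix p)
    dotProductEquiv_symm_vecMul_pluckerMatrix_pluck h
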